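/- arXiv:1910.05073 — 2 statements merged into one kernel-verified Lean document; each statement's English description precedes it below -/
import Mathlib

section
/- For any u, v in the unitary group U(H), one has ‖u − v‖ ≤ d(u,v) ≤ (π/2) ‖u − v‖, where ‖·‖ is the operator norm. -/
noncomputable section

abbrev Hsp (N : ℕ) : Type := EuclideanSpace ℂ (Fin N)

abbrev Op (N : ℕ) : Type := Hsp N →L[ℂ] Hsp N

/-- A map `γ : ℝ → E` is piecewise C¹ on `[a,b]` if there is a partition
`a = τ 0 ≤ τ 1 ≤ ⋯ ≤ τ n = b` such that `γ` is C¹ on each subinterval. -/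
def PiecewiseC1On {E : Type*} [NormedAddCommGroup E] [NormedSpace ℝ E]
    (γ : ℝ → E) (a b : ℝ) : Prop :=
  ∃ (n : ℕ) (τ : ℕ → ℝ), τ 0 = a ∧ τ n = b ∧ (∀ i < n, τ i ≤ τ (i + 1)) ∧
    ∀ i < n, ContDiffOn ℝ 1 γ (Set.Icc (τ i) (τ (i + 1)))

/-- The length `L(γ) = ∫_a^b ‖γ'(t)‖ dt` of a curve. -/
def pathLength {E : Type*} [NormedAddCommGroup E] [NormedSpace ℝ E]
    (γ : ℝ → E) (a b : ℝ) : ℝ :=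
  ∫ t in a..b, ‖deriv γ t‖

/-- Geodesic distance on the unitary group of `EuclideanSpace ℂ (Fin N)`, for the
Finsler metric given by the operator norm: the infimum of lengths of piecewise C¹
curves in the unitary group joining `u` to `v`. -/
def geoDist (N : ℕ) (u v : Op N) : ℝ :=
  sInf {l | ∃ (a b : ℝ) (γ : ℝ → Op N), a ≤ b ∧ PiecewiseC1On γ a b ∧
    (∀ t ∈ Set.Icc a b, γ t ∈ unitary (Op N)) ∧ γ a = u ∧ γ b = v ∧
    l = pathLength γ a b}

/-- `(u, φ)` belongs to the realization `Ũ(H) = {(u,φ) : det u = e^{iφ}}` of the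
universal cover of the unitary group. -/
def InUCover (N : ℕ) (u : Op N) (φ : ℝ) : Prop :=
  u ∈ unitary (Op N) ∧
    LinearMap.det (u : Hsp N →ₗ[ℂ] Hsp N) = Complex.exp (φ * Complex.I)

/-- Geodesic distance on the universal cover `Ũ(H)`: the infimum of the lengths
`∫ ‖γ'(t)‖ dt` over piecewise C¹ curves `t ↦ (γ t, f t)` in `Ũ(H)` joining
`(u, φ)` to `(v, ψ)`. -/
def ucoverDist (N : ℕ) (u : Op N) (φ : ℝ) (v : Op N) (ψ : ℝ) : ℝ :=
  sInf {l | ∃ (a b : ℝ) (γ : ℝ → Op N) (f : ℝ → ℝ), a ≤ b ∧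
    PiecewiseC1On (fun t => (γ t, f t)) a b ∧
    (∀ t ∈ Set.Icc a b, InUCover N (γ t) (f t)) ∧
    γ a = u ∧ f a = φ ∧ γ b = v ∧ f b = ψ ∧
    l = pathLength γ a b}

/-- The multiset of eigenvalues (with multiplicity) of an endomorphism, i.e. the
roots of its characteristic polynomial. -/
def eigenvalueMultiset (N : ℕ) (w : Op N) : Multiset ℂ :=
  (LinearMap.charpoly (w : Hsp N →ₗ[ℂ] Hsp N)).roots

/-- `θ ∈ R`: `(e^{iθ_j})_j` is the family of eigenvalues of `w` (with multiplicity)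
and `∑ θ_j = c`. -/
def InRSet (N : ℕ) (w : Op N) (c : ℝ) (θ : Fin N → ℝ) : Prop :=
  Multiset.map (fun j => Complex.exp ((θ j : ℂ) * Complex.I)) Finset.univ.val
      = eigenvalueMultiset N w ∧ ∑ j, θ j = c

/-- `m = min { max_j |θ_j| : θ ∈ R }`. -/
def mval (N : ℕ) (w : Op N) (c : ℝ) : ℝ :=
  sInf {x | ∃ θ : Fin N → ℝ, InRSet N w c θ ∧ x = ⨆ j, |θ j|}

end

lemma aux_arg (z : ℂ) (hz : ‖z‖ = 1) : |z.arg| ≤ Real.pi / 2 * ‖z - 1‖ := by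
  have h1 : z = Complex.exp (Complex.I * (z.arg : ℝ)) := by
    have := Complex.norm_mul_exp_arg_mul_I z
    rw [hz, Complex.ofReal_one, one_mul, mul_comm] at this
    exact this.symm
  have h2 : ‖z - 1‖ = |2 * Real.sin (z.arg / 2)| := by
    conv_lhs => rw [h1]
    rw [Complex.norm_exp_I_mul_ofReal_sub_one, Real.norm_eq_abs]
  have h3 : |z.arg / 2| ≤ Real.pi / 2 := by
    rw [abs_div, abs_two]
    have := Complex.abs_arg_le_pi z
    linarith
  have h4 := Real.mul_abs_le_abs_sin h3
  rw [h2, abs_mul, abs_two]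
  rw [abs_div, abs_two] at h4
  have hp := Real.pi_pos
  calc |z.arg| = Real.pi * (2 / Real.pi * (|z.arg| / 2)) := by field_simp
    _ ≤ Real.pi * |Real.sin (z.arg / 2)| := by gcongr
    _ = _ := by ring

lemma aux_finite {N : ℕ} (w : Op N) : (spectrum ℂ w).Finite := by
  have := Module.End.finite_spectrum (w : Hsp N →ₗ[ℂ] Hsp N)
  rw [← AlgEquiv.spectrum_eq (AlgEquiv.symm (Module.End.toContinuousLinearMap (𝕜 := ℂ) (Hsp N))) w]
  exact this

lemma aux_log {N : ℕ} (w : unitary (Op N)) : ∃ x : selfAdjoint (Op N),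
    NormedSpace.exp (Complex.I • (x : Op N)) = w ∧
      ‖(x : Op N)‖ ≤ Real.pi / 2 * ‖(w : Op N) - 1‖ := by
  have hc : ∀ f : ℂ → ℂ, ContinuousOn f (spectrum ℂ (w : Op N)) := fun f =>
    (aux_finite (w : Op N)).continuousOn f
  have hn : IsStarNormal (w : Op N) := Unitary.coe_isStarNormal w
  refine ⟨Unitary.argSelfAdjoint w, ?_, ?_⟩
  · rw [Unitary.argSelfAdjoint_coe]
    rw [← cfc_smul Complex.I _ _ (hc _)]
    rw [← CFC.exp_eq_normedSpace_exp (𝕜 := ℂ) (cfc_predicate _ _)]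
    rw [← cfc_comp' _ _ _ (by rw [← Complex.exp_eq_exp_ℂ]; fun_prop) (hc _)]
    conv_rhs => rw [← cfc_id ℂ (w : Op N)]
    apply cfc_congr
    intro z hz
    have h1 : ‖z‖ = 1 := spectrum.norm_eq_one_of_unitary w.2 hz
    have := Complex.norm_mul_exp_arg_mul_I z
    rw [h1, Complex.ofReal_one, one_mul, mul_comm] at this
    simpa [← Complex.exp_eq_exp_ℂ] using this
  · rw [Unitary.argSelfAdjoint_coe]
    apply norm_cfc_le (by positivity)
    intro z hz
    have h1 : ‖z‖ = 1 := spectrum.norm_eq_one_of_unitary w.2 hz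
    rw [Complex.norm_real, Real.norm_eq_abs]
    refine (aux_arg z h1).trans ?_
    have h2 : ‖z - 1‖ ≤ ‖cfc (fun z : ℂ => z - 1) (w : Op N)‖ :=
      norm_apply_le_norm_cfc (fun z : ℂ => z - 1) _ hz (hc _)
    rw [cfc_sub _ _ _ (hc _) (hc _), cfc_id' ℂ (w : Op N), cfc_const_one ℂ (w : Op N)] at h2
    gcongr

lemma aux_piece {E : Type*} [NormedAddCommGroup E] [NormedSpace ℝ E] {γ : ℝ → E} {a b : ℝ}
    (hab : a ≤ b) (h : ContDiffOn ℝ 1 γ (Set.Icc a b)) :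
    IntervalIntegrable (fun t => ‖deriv γ t‖) MeasureTheory.volume a b := by
  rcases hab.eq_or_lt with rfl | hlt
  · simp
  have h1 : ContinuousOn (fun t => ‖derivWithin γ (Set.Icc a b) t‖) (Set.Icc a b) :=
    (h.continuousOn_derivWithin (uniqueDiffOn_Icc hlt) le_rfl).norm
  have h2 := h1.intervalIntegrable_of_Icc (μ := MeasureTheory.volume) hab
  refine h2.congr_uIoo ?_
  intro t ht
  rw [Set.uIoo_of_le hab] at ht
  simp only
  rw [derivWithin_of_mem_nhds (Icc_mem_nhds ht.1 ht.2)]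

lemma aux_lower {E : Type*} [NormedAddCommGroup E] [NormedSpace ℝ E] [CompleteSpace E]
    {γ : ℝ → E} {a b : ℝ} (h : PiecewiseC1On γ a b) : ‖γ b - γ a‖ ≤ pathLength γ a b := by
  obtain ⟨n, τ, rfl, rfl, hle, hC⟩ := h
  rw [pathLength, ← intervalIntegral.sum_integral_adjacent_intervals
    (fun k hk => aux_piece (hle k hk) (hC k hk)), ← Finset.sum_range_sub (fun i => γ (τ i))]
  refine (norm_sum_le _ _).trans (Finset.sum_le_sum fun i hi => ?_)
  have hi := Finset.mem_range.1 hi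
  rw [← intervalIntegral.integral_deriv_of_contDiffOn_Icc (hC i hi) (hle i hi)]
  exact intervalIntegral.norm_integral_le_integral_norm (hle i hi)

lemma aux_upper {N : ℕ} (u v : unitary (Op N)) :
    ∃ (γ : ℝ → Op N), PiecewiseC1On γ 0 1 ∧
    (∀ t ∈ Set.Icc (0 : ℝ) 1, γ t ∈ unitary (Op N)) ∧ γ 0 = u ∧ γ 1 = v ∧
    pathLength γ 0 1 ≤ (Real.pi / 2) * ‖(u : Op N) - (v : Op N)‖ := by
  obtain ⟨x, hx, hxn⟩ := aux_log (star u * v)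
  set y : Op N := Complex.I • (x : Op N) with hy
  have hU : ∀ t : ℝ, NormedSpace.exp (t • y) ∈ unitary (Op N) := by
    intro t
    have := (selfAdjoint.expUnitary (⟨(t : ℂ) • (x : Op N),
      IsSelfAdjoint.smul (Complex.conj_ofReal t) x.2⟩ : selfAdjoint (Op N))).2
    rw [selfAdjoint.expUnitary_coe] at this
    have h0 : t • y = Complex.I • ((t : ℂ) • (x : Op N)) := by
      rw [hy, smul_comm Complex.I (t : ℂ)]
      ext1 z
      rfl
    rw [h0]
    exact this
  have hD : ∀ t : ℝ, HasDerivAt (fun t : ℝ => (u : Op N) * NormedSpace.exp (t • y))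
      ((u : Op N) * (NormedSpace.exp (t • y) * y)) t := fun t =>
    (hasDerivAt_exp_smul_const y t).const_mul (u : Op N)
  have hderiv : deriv (fun t : ℝ => (u : Op N) * NormedSpace.exp (t • y)) =
      fun t => (u : Op N) * (NormedSpace.exp (t • y) * y) := funext fun t => (hD t).deriv
  refine ⟨fun t => (u : Op N) * NormedSpace.exp (t • y), ?_, ?_, ?_, ?_, ?_⟩
  · refine ⟨1, fun i => i, by simp, by simp, by simp, fun i _ => ?_⟩
    apply ContDiff.contDiffOn
    rw [contDiff_one_iff_deriv]
    refine ⟨fun t => (hD t).differentiableAt, ?_⟩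
    rw [hderiv]
    have : Continuous fun t : ℝ => NormedSpace.exp (t • y) :=
      continuous_iff_continuousAt.2 fun t => (hasDerivAt_exp_smul_const y t).continuousAt
    fun_prop
  · intro t _
    exact mul_mem u.2 (hU t)
  · have h0 : (0 : ℝ) • y = 0 := zero_smul ℝ y
    simp only [h0, NormedSpace.exp_zero, mul_one]
  · simp only [one_smul]
    rw [hx]
    simp [← mul_assoc]
  · have hn : ∀ t : ℝ, ‖deriv (fun t : ℝ => (u : Op N) * NormedSpace.exp (t • y)) t‖ =
        ‖(x : Op N)‖ := by
      intro t
      rw [hderiv]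
      simp only
      rw [CStarRing.norm_coe_unitary_mul, CStarRing.norm_mem_unitary_mul _ (hU t), hy, norm_smul]
      simp
    rw [pathLength]
    simp only [hn]
    rw [intervalIntegral.integral_const]
    simp only [sub_zero, one_smul]
    refine hxn.trans_eq ?_
    congr 1
    rw [← CStarRing.norm_coe_unitary_mul u, mul_sub, norm_sub_rev]
    simp [← mul_assoc]

/-- `‖u − v‖ ≤ d(u,v) ≤ (π/2) ‖u − v‖` for the geodesic distance on
the unitary group, where `‖·‖` is the operator norm. -/
theorem norm_sub_le_geoDist_le (N : ℕ) (hN : 1 ≤ N) (u v : unitary (Op N)) :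
    ‖(u : Op N) - (v : Op N)‖ ≤ geoDist N ↑u ↑v ∧
      geoDist N ↑u ↑v ≤ (Real.pi / 2) * ‖(u : Op N) - (v : Op N)‖ := by
  obtain ⟨γ, h1, h2, h3, h4, h5⟩ := aux_upper u v
  have hlow : ∀ l ∈ {l | ∃ (a b : ℝ) (γ : ℝ → Op N), a ≤ b ∧ PiecewiseC1On γ a b ∧
    (∀ t ∈ Set.Icc a b, γ t ∈ unitary (Op N)) ∧ γ a = u ∧ γ b = v ∧
    l = pathLength γ a b}, ‖(u : Op N) - (v : Op N)‖ ≤ l := by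
    rintro l ⟨a, b, γ, -, hp, -, ha, hb, rfl⟩
    have := aux_lower hp
    rwa [ha, hb, norm_sub_rev] at this
  have hmem : pathLength γ 0 1 ∈ {l | ∃ (a b : ℝ) (γ : ℝ → Op N), a ≤ b ∧ PiecewiseC1On γ a b ∧
    (∀ t ∈ Set.Icc a b, γ t ∈ unitary (Op N)) ∧ γ a = u ∧ γ b = v ∧
    l = pathLength γ a b} := ⟨0, 1, γ, zero_le_one, h1, h2, h3, h4, rfl⟩
  exact ⟨le_csInf ⟨_, hmem⟩ hlow, (csInf_le ⟨_, hlow⟩ hmem).trans h5⟩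
end

section
/- Let (u,φ), (v,ψ) ∈ Ũ(H). If d̃((u,φ), (v,ψ)) ≤ π/(2N), then d̃((u,φ), (v,ψ)) = d(u,v) = m, where d is the geodesic distance on U(H). -/
open Module.End in
theorem spectral_unitary {N : ℕ} {w : Op N} (hw : w ∈ unitary (Op N)) :
    ∃ (b : OrthonormalBasis (Fin N) ℂ (Hsp N)) (l : Fin N → ℂ), ∀ j, w (b j) = l j • b j := by
  classical
  have hn : IsStarNormal w := ⟨by
    rw [Unitary.mem_iff] at hw
    rw [Commute, SemiconjBy, hw.1, hw.2]⟩
  set A : Op N := (realPart w : Op N) with hA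
  set B : Op N := (imaginaryPart w : Op N) with hB
  have hAs : (A : Hsp N →ₗ[ℂ] Hsp N).IsSymmetric :=
    ContinuousLinearMap.isSelfAdjoint_iff_isSymmetric.1 (realPart w).2
  have hBs : (B : Hsp N →ₗ[ℂ] Hsp N).IsSymmetric :=
    ContinuousLinearMap.isSelfAdjoint_iff_isSymmetric.1 (imaginaryPart w).2
  have hc : Commute A B := Commute.realPart_imaginaryPart w
  have hc' : Commute (A : Hsp N →ₗ[ℂ] Hsp N) (B : Hsp N →ₗ[ℂ] Hsp N) := by
    ext1 x
    exact congrArg (fun T : Op N => T x) hc.eq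
  have hint := LinearMap.IsSymmetric.directSum_isInternal_of_commute hAs hBs hc'
  have horth := LinearMap.IsSymmetric.orthogonalFamily_eigenspace_inf_eigenspace hAs hBs
  have hfin := WellFoundedGT.finite_ne_bot_of_iSupIndep hint.submodule_iSupIndep
  have := hfin.fintype
  have hint' := DirectSum.isInternal_ne_bot_iff.2 hint
  have horth' := horth.comp (γ := {i : ℂ × ℂ // eigenspace (A : Hsp N →ₗ[ℂ] Hsp N) i.2 ⊓ eigenspace (B : Hsp N →ₗ[ℂ] Hsp N) i.1 ≠ ⊥})
    Subtype.val_injective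
  have : Fintype {i : ℂ × ℂ // eigenspace (A : Hsp N →ₗ[ℂ] Hsp N) i.2 ⊓ eigenspace (B : Hsp N →ₗ[ℂ] Hsp N) i.1 ≠ ⊥} := hfin.fintype
  have hfr : Module.finrank ℂ (Hsp N) = N := by simp
  refine ⟨hint'.subordinateOrthonormalBasis hfr horth', fun j =>
    (hint'.subordinateOrthonormalBasisIndex hfr j horth').1.2 +
    Complex.I * (hint'.subordinateOrthonormalBasisIndex hfr j horth').1.1, fun j => ?_⟩
  have hj := hint'.subordinateOrthonormalBasis_subordinate hfr j horth'
  obtain ⟨h1, h2⟩ := Submodule.mem_inf.1 hj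
  rw [mem_eigenspace_iff] at h1 h2
  have hdec : w = A + Complex.I • B := (realPart_add_I_smul_imaginaryPart w).symm
  conv_lhs => rw [hdec]
  simp only [add_apply, smul_apply]
  simp only [ContinuousLinearMap.coe_coe] at h1 h2
  rw [h1, h2, add_smul, smul_smul]

theorem eig_toMatrix {N : ℕ} {w : Op N} {b : OrthonormalBasis (Fin N) ℂ (Hsp N)} {l : Fin N → ℂ}
    (h : ∀ j, w (b j) = l j • b j) :
    LinearMap.toMatrix b.toBasis b.toBasis (w : Hsp N →ₗ[ℂ] Hsp N) = Matrix.diagonal l := by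
  ext i j
  rw [LinearMap.toMatrix_apply]
  simp only [OrthonormalBasis.coe_toBasis, ContinuousLinearMap.coe_coe, h, map_smul]
  rw [← OrthonormalBasis.coe_toBasis, Finsupp.smul_apply, Module.Basis.repr_self, Finsupp.single_apply, Matrix.diagonal_apply]
  by_cases hij : i = j
  · simp [hij]
  · simp [hij, Ne.symm hij]

theorem eig_det {N : ℕ} {w : Op N} {b : OrthonormalBasis (Fin N) ℂ (Hsp N)} {l : Fin N → ℂ}
    (h : ∀ j, w (b j) = l j • b j) :
    LinearMap.det (w : Hsp N →ₗ[ℂ] Hsp N) = ∏ j, l j := by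
  rw [← LinearMap.det_toMatrix b.toBasis, eig_toMatrix h, Matrix.det_diagonal]

theorem eig_roots {N : ℕ} {w : Op N} {b : OrthonormalBasis (Fin N) ℂ (Hsp N)} {l : Fin N → ℂ}
    (h : ∀ j, w (b j) = l j • b j) :
    eigenvalueMultiset N w = Multiset.map l Finset.univ.val := by
  rw [eigenvalueMultiset, ← LinearMap.charpoly_toMatrix _ b.toBasis, eig_toMatrix h, Matrix.charpoly_diagonal,
    Polynomial.roots_prod _ _ (Finset.prod_ne_zero_iff.2 fun j _ => Polynomial.X_sub_C_ne_zero _)]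
  simp

theorem eig_norm {N : ℕ} {w : Op N} (hw : w ∈ unitary (Op N)) {b : OrthonormalBasis (Fin N) ℂ (Hsp N)} {l : Fin N → ℂ}
    (h : ∀ j, w (b j) = l j • b j) (j : Fin N) : ‖l j‖ = 1 := by
  have := ContinuousLinearMap.norm_map_of_mem_unitary hw (b j)
  rw [h, norm_smul] at this
  simpa using this

noncomputable def diagOp {N : ℕ} (b : OrthonormalBasis (Fin N) ℂ (Hsp N)) (d : Fin N → ℂ) : Op N :=
  ∑ j, d j • InnerProductSpace.rankOne ℂ (b j) (b j)

theorem diagOp_apply {N : ℕ} (b : OrthonormalBasis (Fin N) ℂ (Hsp N)) (d : Fin N → ℂ) (x : Hsp N) :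
    diagOp b d x = ∑ j, (d j * inner ℂ (b j) x) • b j := by
  simp [diagOp, smul_smul]

theorem diagOp_basis {N : ℕ} (b : OrthonormalBasis (Fin N) ℂ (Hsp N)) (d : Fin N → ℂ) (j : Fin N) :
    diagOp b d (b j) = d j • b j := by
  rw [diagOp_apply, Finset.sum_eq_single j]
  · simp
  · intro i _ hij
    simp [b.orthonormal.2 hij]
  · simp

theorem op_ext {N : ℕ} (b : OrthonormalBasis (Fin N) ℂ (Hsp N)) {S T : Op N} (h : ∀ j, S (b j) = T (b j)) : S = T := by
  apply ContinuousLinearMap.coe_injective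
  exact b.toBasis.ext fun j => by simpa using h j

theorem diagOp_unitary {N : ℕ} (b : OrthonormalBasis (Fin N) ℂ (Hsp N)) (d : Fin N → ℂ) (hd : ∀ j, ‖d j‖ = 1) :
    diagOp b d ∈ unitary (Op N) := by
  have hs : star (diagOp b d) = diagOp b (fun j => star (d j)) := by
    rw [diagOp, ContinuousLinearMap.star_eq_adjoint, map_sum, diagOp]
    refine Finset.sum_congr rfl fun j _ => ?_
    rw [map_smulₛₗ, InnerProductSpace.adjoint_rankOne]; rfl
  have h1 : ∀ j, star (d j) * d j = 1 := fun j => by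
    rw [Complex.star_def, Complex.conj_mul', hd]; simp
  rw [Unitary.mem_iff, hs]
  constructor
  · refine op_ext b fun j => ?_
    rw [mul_apply_eq_comp, diagOp_basis, map_smul, diagOp_basis, smul_smul, one_apply_eq_self]
    rw [mul_comm, h1, one_smul]
  · refine op_ext b fun j => ?_
    rw [mul_apply_eq_comp, diagOp_basis, map_smul, diagOp_basis, smul_smul, one_apply_eq_self]
    rw [h1, one_smul]

theorem diagOp_norm {N : ℕ} (b : OrthonormalBasis (Fin N) ℂ (Hsp N)) (d : Fin N → ℂ) {M : ℝ} (hM : 0 ≤ M)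
    (hd : ∀ j, ‖d j‖ ≤ M) : ‖diagOp b d‖ ≤ M := by
  refine ContinuousLinearMap.opNorm_le_bound _ hM fun x => ?_
  refine abs_le_of_sq_le_sq' ?_ (by positivity) |>.2
  rw [mul_pow, ← b.sum_sq_norm_inner_right x, ← b.sum_sq_norm_inner_right (diagOp b d x), Finset.mul_sum]
  refine Finset.sum_le_sum fun j _ => ?_
  have : inner ℂ (b j) (diagOp b d x) = d j * inner ℂ (b j) x := by
    rw [diagOp_apply, b.orthonormal.inner_right_fintype]
  rw [this, norm_mul, mul_pow]
  gcongr
  exact hd j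

theorem path_exists {N : ℕ} {u v : Op N} (hv : v ∈ unitary (Op N)) {φ ψ : ℝ} (hu : InUCover N u φ)
    (b : OrthonormalBasis (Fin N) ℂ (Hsp N)) (θ : Fin N → ℝ)
    (h : ∀ j, (v * star u) (b j) = Complex.exp (θ j * Complex.I) • b j)
    (hs : ∑ j, θ j = ψ - φ) {M : ℝ} (hM : 0 ≤ M) (hθ : ∀ j, |θ j| ≤ M) :
    ∃ (γ : ℝ → Op N) (f : ℝ → ℝ), PiecewiseC1On (fun t => (γ t, f t)) 0 1 ∧
    (∀ t ∈ Set.Icc (0:ℝ) 1, InUCover N (γ t) (f t)) ∧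
    γ 0 = u ∧ f 0 = φ ∧ γ 1 = v ∧ f 1 = ψ ∧ pathLength γ 0 1 ≤ M := by
  have hderiv : ∀ t : ℝ, HasDerivAt (fun t : ℝ => diagOp b (fun j => Complex.exp (t * θ j * Complex.I)) * u)
      (diagOp b (fun j => Complex.exp (t * θ j * Complex.I) * (θ j * Complex.I)) * u) t := by
    intro t
    unfold diagOp
    refine HasDerivAt.mul_const (HasDerivAt.fun_sum fun j _ => ?_) u
    have h1 : HasDerivAt (fun t : ℝ => (t : ℂ) * θ j * Complex.I) (1 * θ j * Complex.I) t :=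
      ((Complex.ofRealCLM.hasDerivAt (x := t)).mul_const _).mul_const _
    have h2 := h1.cexp
    rw [one_mul] at h2
    exact HasDerivAt.smul_const h2 (InnerProductSpace.rankOne ℂ (b j) (b j))
  have hnorm : ∀ (t : ℝ) j, ‖Complex.exp (t * θ j * Complex.I)‖ = 1 := fun t j => by
    rw [← Complex.ofReal_mul]; exact Complex.norm_exp_ofReal_mul_I _
  have hun : ‖u‖ ≤ 1 := ContinuousLinearMap.opNorm_le_bound _ zero_le_one fun x => by
    rw [ContinuousLinearMap.norm_map_of_mem_unitary hu.1, one_mul]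
  have hlen : ∀ t : ℝ, ‖deriv (fun t : ℝ => diagOp b (fun j => Complex.exp (t * θ j * Complex.I)) * u) t‖ ≤ M := by
    intro t
    rw [(hderiv t).deriv]
    calc _ ≤ ‖diagOp b (fun j => Complex.exp (t * θ j * Complex.I) * (θ j * Complex.I))‖ * ‖u‖ := norm_mul_le _ _
      _ ≤ M * 1 := by
        gcongr
        refine diagOp_norm b _ hM fun j => ?_
        rw [norm_mul, hnorm]; simpa using hθ j
      _ = M := mul_one M
  refine ⟨fun t => diagOp b (fun j => Complex.exp (t * θ j * Complex.I)) * u,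
    fun t => φ + t * (ψ - φ), ?_, ?_, ?_, ?_, ?_, ?_, ?_⟩
  · refine ⟨1, fun i => i, by simp, by simp, by simp, fun i _ => ContDiff.contDiffOn ?_⟩
    refine ContDiff.prodMk ?_ (by fun_prop)
    unfold diagOp
    refine ContDiff.mul (ContDiff.sum fun j _ => ?_) contDiff_const
    refine ContDiff.fun_smul ?_ contDiff_const
    refine ContDiff.cexp ?_
    exact ((Complex.ofRealCLM.contDiff).mul contDiff_const).mul contDiff_const
  · intro t _
    refine ⟨mul_mem (diagOp_unitary b _ (hnorm t)) hu.1, ?_⟩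
    rw [show ((diagOp b (fun j => Complex.exp (t * θ j * Complex.I)) * u : Op N) : Hsp N →ₗ[ℂ] Hsp N)
      = (diagOp b (fun j => Complex.exp (t * θ j * Complex.I)) : Hsp N →ₗ[ℂ] Hsp N) * (u : Hsp N →ₗ[ℂ] Hsp N) from rfl,
      map_mul, hu.2, eig_det (fun j => diagOp_basis b _ j), ← Complex.exp_sum, ← Complex.exp_add, ← hs]
    congr 1
    push_cast
    rw [← Finset.sum_mul, ← Finset.mul_sum]; ring
  · have : diagOp b (fun j => Complex.exp (((0:ℝ):ℂ) * θ j * Complex.I)) = 1 :=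
      op_ext b fun j => by rw [diagOp_basis]; simp
    simp only [this, one_mul]
  · simp
  · have : diagOp b (fun j => Complex.exp (((1:ℝ):ℂ) * θ j * Complex.I)) = v * star u :=
      op_ext b fun j => by rw [diagOp_basis, h]; simp
    simp only [this]
    rw [mul_assoc, (Unitary.mem_iff.1 hu.1).1, mul_one]
  · simp
  · have := intervalIntegral.norm_integral_le_of_norm_le_const (a := (0:ℝ)) (b := 1) (C := M)
      (f := fun t => ‖deriv (fun t : ℝ => diagOp b (fun j => Complex.exp (t * θ j * Complex.I)) * u) t‖)
      (fun t _ => by rw [norm_norm]; exact hlen t)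
    refine (Real.le_norm_self _).trans (this.trans (by simp))

theorem cdo_singleton {E : Type*} [NormedAddCommGroup E] [NormedSpace ℝ E] (γ : ℝ → E) (t : ℝ) :
    ContDiffOn ℝ 1 γ {t} := fun x hx => by
  rw [Set.mem_singleton_iff.1 hx]; exact contDiffWithinAt_singleton

theorem sphere_len {E : Type*} [NormedAddCommGroup E] [InnerProductSpace ℝ E]
    {c c' : ℝ → E} {g : ℝ → ℝ} {s t : ℝ} (hst : s ≤ t) (hc : ContinuousOn c (Set.Icc s t))
    (hn : ∀ r ∈ Set.Icc s t, ‖c r‖ = 1)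
    (hd : ∀ x ∈ Set.Ico s t, HasDerivWithinAt c (c' x) (Set.Ioi x) x)
    (hg : Continuous g) (hb : ∀ x ∈ Set.Ico s t, ‖c' x‖ ≤ g x) :
    InnerProductGeometry.angle (c s) (c t) ≤ ∫ r in s..t, g r := by
  have key : ∀ x y : E, ‖x‖ = 1 → ‖y‖ = 1 →
      InnerProductGeometry.angle x y * Real.cos (InnerProductGeometry.angle x y / 2) ≤ ‖y - x‖ := by
    intro x y hx hy
    set A := InnerProductGeometry.angle x y with hA
    have h0 : 0 ≤ A := InnerProductGeometry.angle_nonneg _ _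
    have hpi : A ≤ Real.pi := InnerProductGeometry.angle_le_pi _ _
    have h1 : ‖y - x‖ ^ 2 = (2 * Real.sin (A / 2)) ^ 2 := by
      rw [norm_sub_sq_real, real_inner_comm, ← InnerProductGeometry.cos_angle_mul_norm_mul_norm x y,
        ← hA, hx, hy]
      have : Real.cos A = 1 - 2 * Real.sin (A/2) ^ 2 := by
        have := Real.cos_two_mul (A/2)
        have h2 := Real.sin_sq_add_cos_sq (A/2)
        rw [show 2 * (A/2) = A by ring] at this
        linarith
      rw [this]; ring
    have hs0 : 0 ≤ Real.sin (A / 2) := Real.sin_nonneg_of_nonneg_of_le_pi (by linarith) (by linarith)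
    have h3 : ‖y - x‖ = 2 * Real.sin (A / 2) :=
      (sq_eq_sq₀ (norm_nonneg _) (by linarith)).1 h1
    rw [h3]
    rcases hpi.lt_or_eq with h | h
    · have hcos : 0 < Real.cos (A / 2) := Real.cos_pos_of_mem_Ioo ⟨by linarith, by linarith⟩
      have := Real.le_tan (x := A/2) (by linarith) (by linarith)
      rw [Real.tan_eq_sin_div_cos, le_div_iff₀ hcos] at this
      linarith
    · rw [h, Real.cos_pi_div_two]; linarith [Real.sin_pi_div_two]
  have hang : ∀ x ∈ Set.Icc s t, ContinuousOn (fun r => InnerProductGeometry.angle (c x) (c r)) (Set.Icc s t) := by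
    intro x hx r hr
    have h1 : c x ≠ 0 := fun h => by simpa [h] using hn x hx
    have h2 : c r ≠ 0 := fun h => by simpa [h] using hn r hr
    have := (InnerProductGeometry.continuousAt_angle (x := (c x, c r)) h1 h2)
    exact this.comp_continuousWithinAt (f := fun r => (c x, c r)) (continuousWithinAt_const.prodMk (hc r hr))
  have hI : ∀ x, HasDerivAt (fun r => ∫ q in s..r, g q) (g x) x := fun x =>
    intervalIntegral.integral_hasDerivAt_right (hg.intervalIntegrable _ _)
      (hg.stronglyMeasurableAtFilter _ _) hg.continuousAt
  refine image_le_of_liminf_slope_right_le_deriv_boundary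
    (f := fun r => InnerProductGeometry.angle (c s) (c r)) (B := fun r => ∫ q in s..r, g q) (B' := g)
    (hang s ⟨le_rfl, hst⟩) ?_ (fun x _ => (hI x).continuousAt.continuousWithinAt) (fun x _ => (hI x).hasDerivWithinAt) ?_
    ⟨hst, le_rfl⟩
  · have h1 : c s ≠ 0 := fun h => by simpa [h] using hn s ⟨le_rfl, hst⟩
    simp [InnerProductGeometry.angle_self h1]
  · intro x hx r hr
    have hxI : x ∈ Set.Icc s t := ⟨hx.1, hx.2.le⟩
    have hmem : ∀ᶠ z in nhdsWithin x (Set.Ioi x), z ∈ Set.Ioc x t := Ioc_mem_nhdsGT hx.2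
    have hcx : c x ≠ 0 := fun h => by simpa [h] using hn x hxI
    have hle : nhdsWithin x (Set.Ioi x) ≤ nhdsWithin x (Set.Icc s t) :=
      nhdsWithin_le_of_mem (Filter.mem_of_superset (Ioc_mem_nhdsGT hx.2)
        (fun z hz => ⟨hx.1.trans hz.1.le, hz.2⟩))
    have ht1 : Filter.Tendsto (fun z => InnerProductGeometry.angle (c x) (c z))
        (nhdsWithin x (Set.Ioi x)) (nhds 0) := by
      have := (hang x hxI x hxI).mono_left hle
      simpa [InnerProductGeometry.angle_self hcx] using this
    have ht2 : Filter.Tendsto (fun z => Real.cos (InnerProductGeometry.angle (c x) (c z) / 2))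
        (nhdsWithin x (Set.Ioi x)) (nhds 1) := by
      have := (Real.continuous_cos.tendsto (0/2)).comp (ht1.div_const 2)
      simpa [Function.comp_def] using this
    have ht3 : Filter.Tendsto (fun z => ‖slope c x z‖) (nhdsWithin x (Set.Ioi x)) (nhds ‖c' x‖) := by
      have := (hasDerivWithinAt_iff_tendsto_slope' (by simp)).1 (hd x hx)
      exact this.norm
    have ht4 := ht3.div ht2 one_ne_zero
    rw [div_one] at ht4
    refine Filter.Eventually.frequently ?_
    filter_upwards [hmem, ht4.eventually_lt_const ((hb x hx).trans_lt hr),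
      ht2.eventually_const_lt (show (0:ℝ) < 1 by norm_num)] with z hz h1 h2
    refine lt_of_le_of_lt ?_ h1
    have hzI : z ∈ Set.Icc s t := ⟨hx.1.trans hz.1.le, hz.2⟩
    have htri := InnerProductGeometry.angle_le_angle_add_angle (c s) (c x) (c z)
    have hpos : 0 < z - x := sub_pos.2 hz.1
    have hk := key (c x) (c z) (hn x hxI) (hn z hzI)
    rw [slope_def_field, Pi.div_apply, slope_def_module, norm_smul, norm_inv, Real.norm_eq_abs, abs_of_pos hpos,
      div_eq_inv_mul, mul_div_assoc]
    refine mul_le_mul_of_nonneg_left ?_ (by positivity)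
    rw [le_div_iff₀ h2]
    refine le_trans ?_ hk
    exact mul_le_mul_of_nonneg_right (by linarith) h2.le

theorem piece_len {N : ℕ} {γ : ℝ → Op N} {s t : ℝ} (hst : s ≤ t)
    (hγ : ContDiffOn ℝ 1 γ (Set.Icc s t)) :
    IntervalIntegrable (fun r => ‖deriv γ r‖) MeasureTheory.volume s t ∧
    ((∀ r ∈ Set.Icc s t, γ r ∈ unitary (Op N)) → ∀ y : Hsp N, ‖y‖ = 1 →
     InnerProductGeometry.angle (γ s y) (γ t y) ≤ ∫ r in s..t, ‖deriv γ r‖) := by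
  rcases hst.eq_or_lt with rfl | hlt
  · refine ⟨by simp, fun hu y hy => ?_⟩
    have h1 : γ s y ≠ 0 := by
      have := ContinuousLinearMap.norm_map_of_mem_unitary (hu s ⟨le_rfl, le_rfl⟩) y
      intro h; rw [h, hy] at this; simp at this
    rw [InnerProductGeometry.angle_self h1]; simp
  have hud := uniqueDiffOn_Icc hlt
  have hcont : ContinuousOn (fun r => ‖derivWithin γ (Set.Icc s t) r‖) (Set.Icc s t) :=
    (hγ.continuousOn_derivWithin hud le_rfl).norm
  have hae : ∀ r ∈ Set.Ioo s t, ‖derivWithin γ (Set.Icc s t) r‖ = ‖deriv γ r‖ := fun r hr => by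
    rw [derivWithin_of_mem_nhds (Icc_mem_nhds hr.1 hr.2)]
  set G : ℝ → ℝ := Set.IccExtend hst ((Set.Icc s t).domRestrict (fun r => ‖derivWithin γ (Set.Icc s t) r‖)) with hG
  have hGc : Continuous G := (continuousOn_iff_continuous_domRestrict.1 hcont).Icc_extend'
  have hGe : ∀ r ∈ Set.Icc s t, G r = ‖derivWithin γ (Set.Icc s t) r‖ := fun r hr => by
    rw [hG, Set.IccExtend_of_mem _ _ hr]; rfl
  have heq : Set.EqOn G (fun r => ‖deriv γ r‖) (Set.Ioo s t) := fun r hr => by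
    rw [hGe r ⟨hr.1.le, hr.2.le⟩, hae r hr]
  refine ⟨?_, fun hu y hy => ?_⟩
  · have hi := hGc.intervalIntegrable (μ := MeasureTheory.volume) s t
    rw [intervalIntegrable_iff_integrableOn_Ioo_of_le hst] at hi ⊢
    exact hi.congr_fun heq measurableSet_Ioo
  · have : ∫ r in s..t, ‖deriv γ r‖ = ∫ r in s..t, G r := by
      rw [intervalIntegral.integral_of_le hst, intervalIntegral.integral_of_le hst,
        MeasureTheory.integral_Ioc_eq_integral_Ioo, MeasureTheory.integral_Ioc_eq_integral_Ioo]
      exact (MeasureTheory.setIntegral_congr_fun measurableSet_Ioo heq).symm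
    rw [this]
    have hdiff : ∀ x ∈ Set.Icc s t, HasDerivWithinAt (fun r => γ r y) (derivWithin γ (Set.Icc s t) x y) (Set.Icc s t) x := by
      intro x hx
      have h1 := ((hγ.differentiableOn one_ne_zero) x hx).hasDerivWithinAt
      exact (((ContinuousLinearMap.apply ℂ (Hsp N) y).restrictScalars ℝ).hasFDerivAt.comp_hasDerivWithinAt x h1)
    refine sphere_len (c := fun r => γ r y) (c' := fun x => derivWithin γ (Set.Icc s t) x y) hst
      (fun x hx => (hdiff x hx).continuousWithinAt) ?_ ?_ hGc ?_
    · intro r hr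
      rw [ContinuousLinearMap.norm_map_of_mem_unitary (hu r hr) y, hy]
    · intro x hx
      refine (hdiff x ⟨hx.1, hx.2.le⟩).mono_of_mem_nhdsWithin ?_
      exact Filter.mem_of_superset (Ioc_mem_nhdsGT hx.2)
        (fun z hz => ⟨hx.1.trans hz.1.le, hz.2⟩)
    · intro x hx
      rw [hGe x ⟨hx.1, hx.2.le⟩]
      simpa [hy] using (derivWithin γ (Set.Icc s t) x).le_opNorm y

theorem pw_len {N : ℕ} {γ : ℝ → Op N} {a b : ℝ} 
    (hγ : PiecewiseC1On γ a b) :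
    IntervalIntegrable (fun r => ‖deriv γ r‖) MeasureTheory.volume a b ∧
    ((∀ r ∈ Set.Icc a b, γ r ∈ unitary (Op N)) → ∀ y : Hsp N, ‖y‖ = 1 →
     InnerProductGeometry.angle (γ a y) (γ b y) ≤ pathLength γ a b) := by
  obtain ⟨n, τ, rfl, rfl, hmono, hC⟩ := hγ
  unfold pathLength
  induction n with
  | zero => 
    have := piece_len (γ := γ) (le_refl (τ 0)) (by rw [Set.Icc_self]; exact cdo_singleton _ _)
    exact this
  | succ n ih =>
    have hm : ∀ i ≤ n, τ 0 ≤ τ i := by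
      intro i hi
      induction i with
      | zero => exact le_rfl
      | succ i ih2 => exact (ih2 (by omega)).trans (hmono i (by omega))
    obtain ⟨i1, i2⟩ := ih (fun i hi => hmono i (by omega)) (fun i hi => hC i (by omega))
    obtain ⟨j1, j2⟩ := piece_len (hmono n (by omega)) (hC n (by omega))
    refine ⟨i1.trans j1, fun hu y hy => ?_⟩
    rw [← intervalIntegral.integral_add_adjacent_intervals i1 j1]
    refine (InnerProductGeometry.angle_le_angle_add_angle _ (γ (τ n) y) _).trans (add_le_add ?_ ?_)
    · exact i2 (fun r hr => hu r ⟨hr.1, hr.2.trans (hmono n (by omega))⟩) y hy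
    · exact j2 (fun r hr => hu r ⟨(hm n le_rfl).trans hr.1, hr.2⟩) y hy

theorem pw_restrict {E : Type*} [NormedAddCommGroup E] [NormedSpace ℝ E] {γ : ℝ → E} {a b t : ℝ}
    (hγ : PiecewiseC1On γ a b) (h1 : a ≤ t) (h2 : t ≤ b) : PiecewiseC1On γ a t := by
  obtain ⟨n, τ, rfl, rfl, hmono, hC⟩ := hγ
  refine ⟨n, fun i => min (τ i) t, min_eq_left h1, min_eq_right h2,
    fun i hi => min_le_min_right _ (hmono i hi), fun i hi => ?_⟩
  rcases le_total (τ i) t with h | h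
  · refine (hC i hi).mono (Set.Icc_subset_Icc ?_ ?_)
    · simp [h]
    · simp
  · have : Set.Icc (min (τ i) t) (min (τ (i+1)) t) ⊆ {t} := by
      intro x hx
      rw [min_eq_right h] at hx
      exact le_antisymm (hx.2.trans (min_le_right _ _)) hx.1
    exact ContDiffOn.mono (cdo_singleton _ _) this

theorem pw_cont {E : Type*} [NormedAddCommGroup E] [NormedSpace ℝ E] {γ : ℝ → E} {a b : ℝ}
    (hγ : PiecewiseC1On γ a b) : ContinuousOn γ (Set.Icc a b) := by
  obtain ⟨n, τ, rfl, rfl, hmono, hC⟩ := hγ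
  induction n with
  | zero => simp
  | succ n ih =>
    have h1 := ih (fun i hi => hmono i (by omega)) (fun i hi => hC i (by omega))
    have h2 := (hC n (by omega)).continuousOn
    have hm : ∀ i ≤ n, τ 0 ≤ τ i := by
      intro i hi
      induction i with
      | zero => exact le_rfl
      | succ i ih2 => exact (ih2 (by omega)).trans (hmono i (by omega))
    rw [← Set.Icc_union_Icc_eq_Icc (hm n le_rfl) (hmono n (by omega))]
    exact h1.union_of_isClosed h2 isClosed_Icc isClosed_Icc

theorem arg_bound {N : ℕ} {γ : ℝ → Op N} {a t : ℝ} (hat : a ≤ t)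
    (hγ : PiecewiseC1On γ a t) (hu : ∀ r ∈ Set.Icc a t, γ r ∈ unitary (Op N))
    {b : OrthonormalBasis (Fin N) ℂ (Hsp N)} {l : Fin N → ℂ}
    (h : ∀ j, (γ t * star (γ a)) (b j) = l j • b j) (j : Fin N) :
    |Complex.arg (l j)| ≤ pathLength γ a t := by
  have hua := hu a ⟨le_rfl, hat⟩
  have hut := hu t ⟨hat, le_rfl⟩
  have hl : ‖l j‖ = 1 := eig_norm (mul_mem hut (Unitary.star_mem hua)) h j
  have hy : ‖star (γ a) (b j)‖ = 1 := by
    rw [ContinuousLinearMap.norm_map_of_mem_unitary (Unitary.star_mem hua)]; simp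
  have h1 := (pw_len hγ).2 hu _ hy
  have e1 : γ a (star (γ a) (b j)) = b j := by
    rw [← mul_apply_eq_comp, (Unitary.mem_iff.1 hua).2, one_apply_eq_self]
  have e2 : γ t (star (γ a) (b j)) = l j • b j := by
    rw [← mul_apply_eq_comp, h]
  rw [e1, e2] at h1
  refine le_trans (le_of_eq ?_) h1
  have hl0 : l j ≠ 0 := fun h => by simp [h] at hl
  rw [← Complex.angle_one_left hl0, InnerProductGeometry.angle, InnerProductGeometry.angle]
  have e3 : inner ℝ (b j) (l j • b j) = (l j).re := by
    have e5 : inner ℝ (b j) (l j • b j) = (inner ℂ (b j) (l j • b j)).re := by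
      rw [PiLp.inner_apply, PiLp.inner_apply, Complex.re_sum]; rfl
    rw [e5]
    rw [inner_smul_right, inner_self_eq_norm_sq_to_K]
    simp
  have e4 : inner ℝ (1 : ℂ) (l j) = (l j).re := by
    simp [Complex.inner]
  rw [e3, e4, norm_smul]
  simp

theorem pw_fst {N : ℕ} {γ : ℝ → Op N} {f : ℝ → ℝ} {a b : ℝ}
    (h : PiecewiseC1On (fun t => (γ t, f t)) a b) : PiecewiseC1On γ a b := by
  obtain ⟨n, τ, h0, h1, hmono, hC⟩ := h
  exact ⟨n, τ, h0, h1, hmono, fun i hi => (hC i hi).fst⟩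

theorem exp_arg {z : ℂ} (hz : ‖z‖ = 1) : Complex.exp (Complex.arg z * Complex.I) = z := by
  have := Complex.norm_mul_exp_arg_mul_I z
  rw [hz] at this
  simpa using this

theorem sum_mod {N : ℕ} {u v : Op N} {φ ψ : ℝ} (hu : InUCover N u φ) (hv : InUCover N v ψ)
    {b : OrthonormalBasis (Fin N) ℂ (Hsp N)} {l : Fin N → ℂ}
    (h : ∀ j, (v * star u) (b j) = l j • b j) :
    Complex.exp ((ψ - φ : ℝ) * Complex.I) = Complex.exp ((∑ j, Complex.arg (l j) : ℝ) * Complex.I) := by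
  have hl : ∀ j, ‖l j‖ = 1 := eig_norm (mul_mem hv.1 (Unitary.star_mem hu.1)) h
  have hd := eig_det h
  have hm : (v * star u) * u = v := by rw [mul_assoc, (Unitary.mem_iff.1 hu.1).1, mul_one]
  have h2 : LinearMap.det ((v * star u : Op N) : Hsp N →ₗ[ℂ] Hsp N) * LinearMap.det (u : Hsp N →ₗ[ℂ] Hsp N)
      = LinearMap.det (v : Hsp N →ₗ[ℂ] Hsp N) := by
    rw [← map_mul]
    conv_rhs => rw [← hm]
    rfl
  rw [hd, hu.2, hv.2] at h2
  have h3 : Complex.exp ((∑ j, Complex.arg (l j) : ℝ) * Complex.I) = ∏ j, l j := by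
    rw [Complex.ofReal_sum, Finset.sum_mul, Complex.exp_sum]
    exact Finset.prod_congr rfl fun j _ => exp_arg (hl j)
  rw [h3]
  refine mul_right_cancel₀ (Complex.exp_ne_zero (φ * Complex.I)) ?_
  rw [h2, ← Complex.exp_add]
  congr 1
  push_cast; ring

theorem sum_eq {N : ℕ} (hN : 1 ≤ N) {γ : ℝ → Op N} {f : ℝ → ℝ} {a c : ℝ} (hac : a ≤ c)
    (hγ : PiecewiseC1On (fun t => (γ t, f t)) a c)
    (hu : ∀ t ∈ Set.Icc a c, InUCover N (γ t) (f t))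
    (hL : pathLength γ a c < Real.pi / N)
    {b : OrthonormalBasis (Fin N) ℂ (Hsp N)} {l : Fin N → ℂ}
    (h : ∀ j, (γ c * star (γ a)) (b j) = l j • b j) : ∑ j, Complex.arg (l j) = f c - f a := by
  have hN0 : (0 : ℝ) < N := by exact_mod_cast hN
  have hua := hu a ⟨le_rfl, hac⟩
  have bound : ∀ t ∈ Set.Icc a c, ∀ (b : OrthonormalBasis (Fin N) ℂ (Hsp N)) (l : Fin N → ℂ),
      (∀ j, (γ t * star (γ a)) (b j) = l j • b j) → |∑ j, Complex.arg (l j)| < Real.pi := by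
    intro t ht b l h
    have hpw := pw_restrict (pw_fst hγ) ht.1 ht.2
    have h1 := arg_bound ht.1 hpw (fun r hr => (hu r ⟨hr.1, hr.2.trans ht.2⟩).1) h
    have h2 : pathLength γ a t ≤ pathLength γ a c := by
      refine intervalIntegral.integral_mono_interval le_rfl ht.1 ht.2 ?_ (pw_len (pw_fst hγ)).1
      exact Filter.Eventually.of_forall fun _ => norm_nonneg _
    calc |∑ j, Complex.arg (l j)| ≤ ∑ j, |Complex.arg (l j)| := Finset.abs_sum_le_sum_abs _ _
      _ ≤ ∑ j : Fin N, pathLength γ a c := Finset.sum_le_sum fun j _ => (h1 j).trans h2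
      _ = N * pathLength γ a c := by simp
      _ < N * (Real.pi / N) := by gcongr
      _ = Real.pi := by field_simp
  have hS := bound c ⟨hac, le_rfl⟩ b l h
  have hf : ContinuousOn (fun t => |f t - f a|) (Set.Icc a c) :=
    (((continuous_snd.comp_continuousOn (pw_cont hγ))).sub continuousOn_const).abs
  have hD : |f c - f a| < Real.pi := by
    by_contra hcon
    push Not at hcon
    obtain ⟨t, ht, hte⟩ := intermediate_value_Icc hac hf ⟨by simpa using Real.pi_pos.le, hcon⟩
    obtain ⟨b', l', h'⟩ := spectral_unitary (mul_mem (hu t ht).1 (Unitary.star_mem hua.1))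
    have hS' := bound t ht b' l' h'
    have he := congrArg Complex.re (sum_mod hua (hu t ht) h')
    rw [Complex.exp_ofReal_mul_I_re, Complex.exp_ofReal_mul_I_re, ← Real.cos_abs, ← Real.cos_abs (∑ j, _)] at he
    simp only at hte
    rw [hte] at he
    have := Real.injOn_cos ⟨Real.pi_pos.le, le_rfl⟩ ⟨abs_nonneg _, hS'.le⟩ he
    linarith
  have he := sum_mod hua (hu c ⟨hac, le_rfl⟩) h
  rw [abs_lt] at hS hD
  have := Complex.exp_inj_of_neg_pi_lt_of_le_pi (by simpa using hD.1) (by simpa using hD.2.le)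
    (by simpa using hS.1) (by simpa using hS.2.le) he
  have := congrArg Complex.im this
  simpa using this.symm

theorem abs_arg_exp_le (x : ℝ) : |Complex.arg (Complex.exp (x * Complex.I))| ≤ |x| := by
  rcases le_or_gt |x| Real.pi with h | h
  · rcases h.lt_or_eq with h | h
    · rw [abs_lt] at h
      rw [Complex.arg_exp_mul_I, (toIocMod_eq_self Real.two_pi_pos).2 ⟨by linarith, by linarith⟩]
    · rw [h]; exact Complex.abs_arg_le_pi _
  · exact (Complex.abs_arg_le_pi _).trans h.le
/-- if `d̃((u,φ),(v,ψ)) ≤ π/(2N)` then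
`d̃((u,φ),(v,ψ)) = d(u,v) = m`. -/
theorem ucoverDist_eq_geoDist_eq_mval_of_le (N : ℕ) (hN : 1 ≤ N)
    (u v : unitary (Op N)) (φ ψ : ℝ)
    (hu : InUCover N ↑u φ) (hv : InUCover N ↑v ψ)
    (h : ucoverDist N ↑u φ ↑v ψ ≤ Real.pi / (2 * N)) :
    ucoverDist N ↑u φ ↑v ψ = geoDist N ↑u ↑v ∧
      geoDist N ↑u ↑v = mval N ↑(v * u⁻¹) (ψ - φ) := by

  classical
  have hN0 : (0 : ℝ) < N := by exact_mod_cast hN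
  have hw : ((v * u⁻¹ : unitary (Op N)) : Op N) = (v : Op N) * star (u : Op N) := rfl
  rw [hw]
  obtain ⟨b, l, hb⟩ := spectral_unitary (mul_mem hv.1 (Unitary.star_mem hu.1))
  have hl : ∀ j, ‖l j‖ = 1 := eig_norm (mul_mem hv.1 (Unitary.star_mem hu.1)) hb
  have hne : Nonempty (Fin N) := ⟨⟨0, hN⟩⟩
  set S := {x | ∃ (a b : ℝ) (γ : ℝ → Op N) (f : ℝ → ℝ), a ≤ b ∧
    PiecewiseC1On (fun t => (γ t, f t)) a b ∧
    (∀ t ∈ Set.Icc a b, InUCover N (γ t) (f t)) ∧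
    γ a = u ∧ f a = φ ∧ γ b = v ∧ f b = ψ ∧
    x = pathLength γ a b} with hS
  have hSd : ucoverDist N ↑u φ ↑v ψ = sInf S := rfl
  have hlen0 : ∀ {a b : ℝ} (γ : ℝ → Op N), a ≤ b → 0 ≤ pathLength γ a b := fun γ hab =>
    intervalIntegral.integral_nonneg hab fun _ _ => norm_nonneg _
  have hSb : BddBelow S := ⟨0, by
    rintro x ⟨a, b, γ, f, hab, -, -, -, -, -, -, rfl⟩; exact hlen0 γ hab⟩
  -- paths from angle families
  have hpath : ∀ θ : Fin N → ℝ, (∀ j, Complex.exp (θ j * Complex.I) = l j) → ∑ j, θ j = ψ - φ →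
      ∃ x ∈ S, x ≤ ⨆ j, |θ j| := by
    intro θ h1 h2
    have hle : ∀ j, |θ j| ≤ ⨆ j, |θ j| := fun j => le_ciSup (f := fun j => |θ j|) (Set.finite_range _).bddAbove j
    obtain ⟨γ, f, g1, g2, g3, g4, g5, g6, g7⟩ := path_exists hv.1 hu b θ
      (fun j => by rw [hb, h1]) h2 ((abs_nonneg _).trans (hle hne.some)) hle
    exact ⟨_, ⟨0, 1, γ, f, zero_le_one, g1, g2, g3, g4, g5, g6, rfl⟩, g7⟩
  have hSne : S.Nonempty := by
    obtain ⟨n, hn⟩ := Complex.exp_eq_exp_iff_exists_int.1 (sum_mod hu hv hb)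
    have hn' : ψ - φ = (∑ j, Complex.arg (l j)) + n * (2 * Real.pi) := by
      have := congrArg Complex.im hn
      simpa using this
    let i0 : Fin N := hne.some
    obtain ⟨x, hx, -⟩ := hpath (fun j => Complex.arg (l j) + if j = i0 then n * (2 * Real.pi) else 0)
      (fun j => by
        by_cases hj : j = i0
        · rw [if_pos hj, ← exp_arg (hl j), Complex.exp_eq_exp_iff_exists_int]
          refine ⟨n, ?_⟩
          rw [exp_arg (hl j)]
          push_cast; ring
        · rw [if_neg hj, add_zero, exp_arg (hl j)])
      (by rw [Finset.sum_add_distrib, hn']; simp)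
    exact ⟨x, hx⟩
  -- the principal arguments have the right sum
  have hsum : ∑ j, Complex.arg (l j) = ψ - φ := by
    have hlt : sInf S < Real.pi / N := by
      rw [← hSd]
      refine h.trans_lt ?_
      gcongr
      linarith
    obtain ⟨x, ⟨a, c, γ, f, hac, g1, g2, g3, g4, g5, g6, rfl⟩, hx⟩ := exists_lt_of_csInf_lt hSne hlt
    rw [← g4, ← g6]
    exact sum_eq hN hac g1 g2 hx (by rw [g3, g5]; exact hb)
  set m0 := ⨆ j, |Complex.arg (l j)| with hm0
  have hd1 : ucoverDist N ↑u φ ↑v ψ ≤ m0 := by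
    obtain ⟨x, hx, hxm⟩ := hpath (fun j => Complex.arg (l j)) (fun j => exp_arg (hl j)) hsum
    exact (csInf_le hSb hx).trans hxm
  have hd2 : geoDist N ↑u ↑v ≤ ucoverDist N ↑u φ ↑v ψ := by
    refine csInf_le_csInf ⟨0, ?_⟩ hSne ?_
    · rintro x ⟨a, b, γ, hab, -, -, -, -, rfl⟩; exact hlen0 γ hab
    · rintro x ⟨a, b, γ, f, hab, g1, g2, g3, g4, g5, g6, rfl⟩
      exact ⟨a, b, γ, hab, pw_fst g1, fun t ht => (g2 t ht).1, g3, g5, rfl⟩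
  have hd3 : m0 ≤ geoDist N ↑u ↑v := by
    refine le_csInf ?_ ?_
    · obtain ⟨x, a, b, γ, f, hab, g1, g2, g3, g4, g5, g6, rfl⟩ := hSne
      exact ⟨_, a, b, γ, hab, pw_fst g1, fun t ht => (g2 t ht).1, g3, g5, rfl⟩
    · rintro x ⟨a, c, γ, hab, g1, g2, g3, g4, rfl⟩
      exact ciSup_le fun j => arg_bound hab g1 g2 (by rw [g3, g4]; exact hb) j
  have hm : mval N ((v : Op N) * star (u : Op N)) (ψ - φ) = m0 := by
    have hroots := eig_roots hb
    refine le_antisymm (csInf_le ⟨0, ?_⟩ ?_) (le_csInf ?_ ?_)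
    · rintro x ⟨θ, -, rfl⟩
      exact Real.iSup_nonneg fun j => abs_nonneg _
    · refine ⟨fun j => Complex.arg (l j), ⟨?_, hsum⟩, rfl⟩
      rw [hroots]
      exact Multiset.map_congr rfl fun j _ => exp_arg (hl j)
    · refine ⟨_, fun j => Complex.arg (l j), ⟨?_, hsum⟩, rfl⟩
      rw [hroots]
      exact Multiset.map_congr rfl fun j _ => exp_arg (hl j)
    · rintro x ⟨θ, ⟨h1, -⟩, rfl⟩
      refine ciSup_le fun j => ?_
      have hj : l j ∈ Multiset.map (fun j => Complex.exp ((θ j : ℂ) * Complex.I)) Finset.univ.val := by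
        rw [h1, hroots]
        exact Multiset.mem_map_of_mem _ (Finset.mem_univ j)
      obtain ⟨i, -, hi⟩ := Multiset.mem_map.1 hj
      rw [← hi]
      exact (abs_arg_exp_le _).trans (le_ciSup (f := fun j => |θ j|) (Set.finite_range _).bddAbove i)
  rw [hm]
  exact ⟨le_antisymm (hd1.trans hd3) hd2, le_antisymm (hd2.trans hd1) hd3⟩
end
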